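/- If the activity probability q ∈ [0, 1] satisfies f(q) < 0, then h(p) ≤ f(q) < 0 for all p ∈ [0, 1]; hence competing for public parking is a dominant choice for every active driver and the pure profile with competing probability p = 1 is the unique symmetric Bayesian equilibrium. -/

import Mathlib

/-!
The cost `W (k + 1)` of competing increases with the number `k` of competing opponents. When `n`
opponents are active, at most `n` of them compete, so the expected cost of competing is at most
`W (n + 1)`, whatever the probability `p` with which they compete. Averaging over the binomially
distributed number `n` of active opponents gives `h p ≤ f q`.
-/

section BinomialMean

variable {K : Type*} [CommRing K]

/-- The expectation of `a k` for `k` binomially distributed with `n` trials and success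
probability `x`. The weights are values of Bernstein polynomials, and `x` may be any element of
the ring; it is a probability when `0 ≤ x ≤ 1`. -/
noncomputable def binomialMean (n : ℕ) (x : K) (a : ℕ → K) : K :=
  ∑ k ∈ Finset.range (n + 1), (bernsteinPolynomial K n k).eval x * a k

lemma binomialMean_eq_sum (n : ℕ) (x : K) (a : ℕ → K) :
    binomialMean n x a =
      ∑ k ∈ Finset.range (n + 1), (n.choose k : K) * x ^ k * (1 - x) ^ (n - k) * a k := by
  simp [binomialMean, bernsteinPolynomial]

lemma binomialMean_const (n : ℕ) (x c : K) : binomialMean n x (fun _ ↦ c) = c := by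
  rw [binomialMean, ← Finset.sum_mul, ← Polynomial.eval_finsetSum, bernsteinPolynomial.sum,
    Polynomial.eval_one, one_mul]

variable [PartialOrder K] [IsOrderedRing K] {x y : K} {a b : ℕ → K} {n : ℕ}

lemma eval_bernsteinPolynomial_nonneg (hx : x ∈ Set.Icc 0 1) (n k : ℕ) :
    0 ≤ (bernsteinPolynomial K n k).eval x := by
  have hx₀ : 0 ≤ x := hx.1
  have hx₁ : 0 ≤ 1 - x := sub_nonneg.2 hx.2
  simp only [bernsteinPolynomial, Polynomial.eval_mul, Polynomial.eval_natCast,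
    Polynomial.eval_pow, Polynomial.eval_X, Polynomial.eval_sub, Polynomial.eval_one]
  positivity

lemma binomialMean_le_binomialMean (hx : x ∈ Set.Icc 0 1) (hab : ∀ k ≤ n, a k ≤ b k) :
    binomialMean n x a ≤ binomialMean n x b :=
  Finset.sum_le_sum fun k hk ↦ mul_le_mul_of_nonneg_left
    (hab k (Finset.mem_range_succ_iff.1 hk)) (eval_bernsteinPolynomial_nonneg hx n k)

lemma binomialMean_le_of_monotone (ha : Monotone a) (hx : x ∈ Set.Icc 0 1) (n : ℕ) :
    binomialMean n x a ≤ a n :=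
  calc binomialMean n x a ≤ binomialMean n x (fun _ ↦ a n) :=
        binomialMean_le_binomialMean hx fun _ hk ↦ ha hk
    _ = a n := binomialMean_const n x (a n)

lemma binomialMean_binomialMean_le_of_monotone (ha : Monotone a) (hx : x ∈ Set.Icc 0 1)
    (hy : y ∈ Set.Icc 0 1) (n : ℕ) :
    binomialMean n y (fun m ↦ binomialMean m x a) ≤ binomialMean n y a :=
  binomialMean_le_binomialMean hy fun m _ ↦ binomialMean_le_of_monotone ha hx m

end BinomialMean

section CompetitionCost

variable {K : Type*} [Field K] [LinearOrder K] [IsStrictOrderedRing K] {r γ : K}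

/-- The expected cost of competing when `k` drivers compete for `r` public spots: each of them gets
a spot, at cost `1`, with probability `min 1 (r / k)`, and pays `γ` otherwise. At `k = 0` the
convention `r / 0 = 0` makes this `γ`. -/
def competitionCost (r γ : K) (k : ℕ) : K :=
  min 1 (r / k) + (1 - min 1 (r / k)) * γ

lemma antitone_min_one_div_succ (hr : 0 ≤ r) :
    Antitone fun k : ℕ ↦ min 1 (r / (k + 1 : ℕ)) := by
  intro j k hjk
  dsimp only
  gcongr

lemma monotone_competitionCost_succ (hr : 0 ≤ r) (hγ : 1 ≤ γ) :
    Monotone fun k ↦ competitionCost r γ (k + 1) := by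
  intro j k hjk
  have hprob : min 1 (r / (k + 1 : ℕ)) ≤ min 1 (r / (j + 1 : ℕ)) :=
    antitone_min_one_div_succ hr hjk
  have hgap := mul_le_mul_of_nonneg_right hprob (sub_nonneg.2 hγ)
  simp only [competitionCost]
  linarith

end CompetitionCost

theorem stmt_17_general {K : Type*} [CommRing K] [PartialOrder K] [IsOrderedRing K]
    {N : ℕ} (hN : 0 < N) {β : K} {W : ℕ → K} (hW : Monotone fun k ↦ W (k + 1)) {f h : K → K}
    (hf : ∀ p, f p = -β + ∑ k ∈ Finset.range N,
      W (k + 1) * ((N - 1).choose k : K) * p ^ k * (1 - p) ^ (N - 1 - k))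
    {q : K} (hq : q ∈ Set.Icc 0 1)
    (hh : ∀ p, h p = -β + ∑ n ∈ Finset.range N,
      ((N - 1).choose n : K) * q ^ n * (1 - q) ^ (N - 1 - n) *
        ∑ k ∈ Finset.range (n + 1),
          W (k + 1) * (n.choose k : K) * p ^ k * (1 - p) ^ (n - k))
    {p : K} (hp : p ∈ Set.Icc 0 1) : h p ≤ f q := by
  obtain ⟨m, rfl⟩ := Nat.exists_eq_add_one.2 hN
  have hf_mean : f q = -β + binomialMean m q fun k ↦ W (k + 1) := by
    simp only [hf, binomialMean_eq_sum, Nat.add_sub_cancel, mul_assoc, mul_comm (W _)]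
  have hh_mean : h p = -β + binomialMean m q fun n ↦ binomialMean n p fun k ↦ W (k + 1) := by
    simp only [hh, binomialMean_eq_sum, Nat.add_sub_cancel, mul_assoc, mul_comm (W _)]
  rw [hf_mean, hh_mean]
  gcongr
  exact binomialMean_binomialMean_le_of_monotone hW hp hq m

/-- If the activity probability q ∈ [0,1] satisfies f(q) < 0, then
h(p) ≤ f(q) < 0 for all p ∈ [0,1]; hence competing for public parking is a dominant
choice for every active driver. -/
theorem stmt_17 (N R : ℕ) (hN : 1 < N) (hR : 1 ≤ R)
    (β γ : ℝ) (hβ : 1 < β) (hβγ : β < γ)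
    (W : ℕ → ℝ)
    (hW : ∀ k : ℕ, W k = min 1 ((R : ℝ) / (k : ℝ)) + (1 - min 1 ((R : ℝ) / (k : ℝ))) * γ)
    (f : ℝ → ℝ)
    (hf : ∀ p : ℝ, f p = -β + ∑ k ∈ Finset.range N,
      W (k + 1) * ((N - 1).choose k : ℝ) * p ^ k * (1 - p) ^ (N - 1 - k))
    (q : ℝ) (hq : q ∈ Set.Icc (0 : ℝ) 1)
    (h : ℝ → ℝ)
    (hh : ∀ p : ℝ, h p = -β + ∑ n ∈ Finset.range N,
      ((N - 1).choose n : ℝ) * q ^ n * (1 - q) ^ (N - 1 - n) *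
        ∑ k ∈ Finset.range (n + 1),
          W (k + 1) * (n.choose k : ℝ) * p ^ k * (1 - p) ^ (n - k))
    (hfq : f q < 0) :
    ∀ p ∈ Set.Icc (0 : ℝ) 1, h p ≤ f q ∧ h p < 0 := by
  obtain rfl : W = competitionCost (R : ℝ) γ := funext hW
  intro p hp
  have hle : h p ≤ f q := stmt_17_general (by lia)
    (monotone_competitionCost_succ R.cast_nonneg (hβ.trans hβγ).le) hf hq hh hp
  exact ⟨hle, hle.trans_lt hfq⟩
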